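/- Let Γ be a distance-regular graph with diameter D ≥ 2, valency k and intersection number a_1, and let t ≥ 3 be an integer. If Γ contains a t-claw but no (t+1)-claws, then Γ contains a clique C with t·(|C| − 1) ≥ 2k − t(a_1+1), i.e., a clique with at least (2k − t(a_1+1))/t + 1 vertices. -/

import Mathlib

/-!
Fajtlowicz: a finite graph with `n` vertices satisfies `2n ≤ α (Δ + ω + 1)`. For `s` a maximum
independent set, every vertex `z` has a dominator in `s`, that is, some `y ∈ s` with `y = z` or `y`
adjacent to `z`. Counting each vertex once per dominator, and once more if it has only one, counts
it at least twice. The first count is at most `α (Δ + 1)`. In the second, the vertices whose only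
dominator is `y` form a clique: exchanging `y` for one of them gives another maximum independent
set, in which the exchanged vertex has to dominate the others. So the second count is at most
`α ω`.

The theorem is this inequality for the graph induced on the neighbours of a vertex `x`: there
`n = k` and `Δ = a₁`, while `α ≤ t` in the absence of `(t + 1)`-claws, and a clique of order `ω`
together with `x` is a clique of the whole graph.
-/

open SimpleGraph Finset

/-- `G` is a distance-regular graph with diameter `D` and intersection numbers
`b i` (number of neighbours of `y` at distance `i+1` from `x` when `dist x y = i`) and
`c i` (number of neighbours of `y` at distance `i-1` from `x` when `dist x y = i`). -/
def IsDRG {V : Type*} [Fintype V] (G : SimpleGraph V) (D : ℕ) (b c : ℕ → ℕ) : Prop :=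
  G.Connected ∧
  (∃ x y : V, G.dist x y = D) ∧
  (∀ x y : V, G.dist x y ≤ D) ∧
  c 0 = 0 ∧ c 1 = 1 ∧ b D = 0 ∧
  (∀ i ≤ D, ∀ x y : V, G.dist x y = i →
    {z : V | G.Adj y z ∧ G.dist x z = i - 1}.ncard = c i ∧
    {z : V | G.Adj y z ∧ G.dist x z = i + 1}.ncard = b i)

/-- `G` contains a `t`-claw: a vertex together with `t` pairwise nonadjacent neighbours
(an induced `K_{1,t}`). -/
def HasClaw {V : Type*} (G : SimpleGraph V) (t : ℕ) : Prop :=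
  ∃ (x : V) (s : Finset V), s.card = t ∧ (∀ y ∈ s, G.Adj x y) ∧
    (s : Set V).Pairwise fun y z => ¬ G.Adj y z

/-- `θ` is an eigenvalue of the (real) adjacency matrix of `G`. -/
def IsAdjEigenvalue {V : Type*} [Fintype V] (G : SimpleGraph V) [DecidableRel G.Adj]
    (θ : ℝ) : Prop :=
  ∃ v : V → ℝ, v ≠ 0 ∧ (G.adjMatrix ℝ).mulVec v = θ • v

/-- `G` contains an induced quadrangle: vertices `x, z₁, y, z₂` with
`dist x y = dist z₁ z₂ = 2` inducing a 4-cycle. -/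
def HasQuadrangle {V : Type*} (G : SimpleGraph V) : Prop :=
  ∃ x z₁ y z₂ : V, G.dist x y = 2 ∧ G.dist z₁ z₂ = 2 ∧
    G.Adj x z₁ ∧ G.Adj z₁ y ∧ G.Adj y z₂ ∧ G.Adj z₂ x

/-- The diameter-3 intersection array `{β₀,β₁,β₂; γ₁,γ₂,γ₃}`. -/
def arr3 (b c : ℕ → ℕ) (β₀ β₁ β₂ γ₁ γ₂ γ₃ : ℕ) : Prop :=
  b 0 = β₀ ∧ b 1 = β₁ ∧ b 2 = β₂ ∧ c 1 = γ₁ ∧ c 2 = γ₂ ∧ c 3 = γ₃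

section PrivateNeighbors

variable {V : Type*} [DecidableEq V] (G : SimpleGraph V) [DecidableRel G.Adj]

/-- The elements of `s` that dominate the vertex `z`, i.e. whose closed neighbourhood contains
`z`. -/
def dominators (s : Finset V) (z : V) : Finset V :=
  {y ∈ s | y = z ∨ G.Adj y z}

/-- The private neighbours of `y` with respect to `s`: the vertices dominated by `y` and by no other
element of `s`. As in domination theory, `y` itself may be among them; there are none if `y ∉ s`. -/
def privateNeighbors [Fintype V] (s : Finset V) (y : V) : Finset V :=
  {z | dominators G s z = {y}}

variable {G} {s : Finset V} {y z : V}

lemma mem_dominators : y ∈ dominators G s z ↔ y ∈ s ∧ (y = z ∨ G.Adj y z) :=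
  mem_filter

lemma mem_privateNeighbors [Fintype V] :
    z ∈ privateNeighbors G s y ↔ dominators G s z = {y} := by
  simp only [privateNeighbors, mem_filter_univ]

lemma dominators_eq_empty_iff : dominators G s z = ∅ ↔ ∀ y ∈ s, y ≠ z ∧ ¬ G.Adj y z := by
  simp only [dominators, filter_eq_empty_iff, not_or, ne_eq]

lemma isIndepSet_insert_of_dominators_eq_empty (hs : G.IsIndepSet s)
    (hz : dominators G s z = ∅) : G.IsIndepSet (insert z s : Finset V) := by
  rw [dominators_eq_empty_iff] at hz
  rw [coe_insert]
  exact hs.insert fun y hy _ => ⟨fun h => (hz y hy).2 h.symm, (hz y hy).2⟩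

lemma card_insert_of_dominators_eq_empty (hz : dominators G s z = ∅) :
    #(insert z s) = #s + 1 :=
  card_insert_of_notMem fun h => (dominators_eq_empty_iff.1 hz z h).1 rfl

lemma dominators_nonempty [Finite V] (hs : G.IsMaximumIndepSet s) (z : V) :
    (dominators G s z).Nonempty := by
  by_contra! hz
  have hle := hs.maximum _ (isIndepSet_insert_of_dominators_eq_empty hs.isIndepSet hz)
  rw [card_insert_of_dominators_eq_empty hz] at hle
  omega

lemma dominators_erase : dominators G (s.erase y) z = (dominators G s z).erase y := by
  ext w
  simp only [mem_dominators, mem_erase, and_assoc]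

lemma mem_of_dominators_eq_singleton (hz : dominators G s z = {y}) : y ∈ s :=
  (mem_dominators.1 (hz ▸ mem_singleton_self y)).1

lemma dominators_erase_eq_empty [Fintype V] (hz : z ∈ privateNeighbors G s y) :
    dominators G (s.erase y) z = ∅ := by
  rw [dominators_erase, mem_privateNeighbors.1 hz, erase_singleton]

lemma isMaximumIndepSet_insert_erase [Fintype V] (hs : G.IsMaximumIndepSet s)
    (hz : z ∈ privateNeighbors G s y) : G.IsMaximumIndepSet (insert z (s.erase y)) where
  isIndepSet := isIndepSet_insert_of_dominators_eq_empty
    (hs.isIndepSet.mono (coe_subset.2 (erase_subset y s))) (dominators_erase_eq_empty hz)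
  maximum r hr := by
    rw [card_insert_of_dominators_eq_empty (dominators_erase_eq_empty hz),
      card_erase_add_one (mem_of_dominators_eq_singleton (mem_privateNeighbors.1 hz))]
    exact hs.maximum r hr

lemma isClique_privateNeighbors [Fintype V] (hs : G.IsMaximumIndepSet s) (y : V) :
    G.IsClique (privateNeighbors G s y : Set V) := by
  intro u hu v hv huv
  obtain ⟨w, hw⟩ := dominators_nonempty (isMaximumIndepSet_insert_erase hs hu) v
  obtain ⟨hw, hwv⟩ := mem_dominators.1 hw
  rcases mem_insert.1 hw with rfl | hw
  · exact hwv.resolve_left huv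
  · have hmem : w ∈ dominators G (s.erase y) v := mem_dominators.2 ⟨hw, hwv⟩
    rw [dominators_erase_eq_empty hv] at hmem
    exact absurd hmem (notMem_empty w)

lemma sum_card_dominators [Fintype V] (s : Finset V) :
    ∑ z, #(dominators G s z) = ∑ y ∈ s, (G.degree y + 1) := by
  refine (sum_card_bipartiteAbove_eq_sum_card_bipartiteBelow _).symm.trans
    (sum_congr rfl fun y _ => ?_)
  have hclosed : bipartiteAbove (fun y z => y = z ∨ G.Adj y z) univ y
      = insert y (G.neighborFinset y) := by
    ext z
    simp only [mem_bipartiteAbove, mem_univ, true_and, mem_insert, mem_neighborFinset, eq_comm]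
  rw [hclosed, card_insert_of_notMem (G.notMem_neighborFinset_self y),
    card_neighborFinset_eq_degree]

lemma sum_card_privateNeighbors [Fintype V] (s : Finset V) :
    ∑ y ∈ s, #(privateNeighbors G s y) = ∑ z, #{y ∈ s | dominators G s z = {y}} :=
  sum_card_bipartiteAbove_eq_sum_card_bipartiteBelow fun y z => dominators G s z = {y}

lemma two_le_card_dominators_add (hz : (dominators G s z).Nonempty) :
    2 ≤ #(dominators G s z) + #{y ∈ s | dominators G s z = {y}} := by
  rcases hz.exists_eq_singleton_or_nontrivial with ⟨y, hy⟩ | hz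
  · have hpos : 0 < #{y ∈ s | dominators G s z = {y}} :=
      card_pos.2 ⟨y, mem_filter.2 ⟨mem_of_dominators_eq_singleton hy, hy⟩⟩
    rw [hy, card_singleton, ← hy]
    omega
  · have hlt : 1 < #(dominators G s z) := one_lt_card_iff_nontrivial.2 hz
    omega

end PrivateNeighbors

theorem two_mul_card_le_indepNum_mul {V : Type*} [Fintype V] (G : SimpleGraph V)
    [DecidableRel G.Adj] :
    2 * Fintype.card V ≤ G.indepNum * (G.maxDegree + G.cliqueNum + 1) := by
  classical
  obtain ⟨s, hs⟩ := G.maximumIndepSet_exists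
  calc 2 * Fintype.card V
    _ = ∑ _z : V, 2 := by rw [sum_const, card_univ, smul_eq_mul, mul_comm]
    _ ≤ ∑ z, (#(dominators G s z) + #{y ∈ s | dominators G s z = {y}}) :=
      sum_le_sum fun z _ => two_le_card_dominators_add (dominators_nonempty hs z)
    _ = ∑ y ∈ s, (G.degree y + 1 + #(privateNeighbors G s y)) := by
      rw [sum_add_distrib, sum_add_distrib, sum_card_dominators, sum_card_privateNeighbors]
    _ ≤ ∑ _y ∈ s, (G.maxDegree + 1 + G.cliqueNum) := by
      gcongr with y
      · exact G.degree_le_maxDegree y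
      · exact (isClique_privateNeighbors hs y).card_le_cliqueNum
    _ = G.indepNum * (G.maxDegree + G.cliqueNum + 1) := by
      rw [sum_const, smul_eq_mul, G.maximumIndepSet_card_eq_indepNum s hs, add_right_comm]

section LocalGraph

variable {V : Type*} (G : SimpleGraph V) (x : V)

/-- The local graph of `G` at `x`: the subgraph induced on the neighbours of `x`. Claws centred at
`x` are its independent sets, and its cliques are those of `G` through `x` with `x` removed. -/
abbrev localGraph : SimpleGraph (G.neighborSet x) :=
  G.induce (G.neighborSet x)

variable {G x}

lemma degree_localGraph (y : G.neighborSet x) [Fintype ((localGraph G x).neighborSet y)] :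
    (localGraph G x).degree y = (G.commonNeighbors x y).ncard := by
  have himage : Subtype.val '' (localGraph G x).neighborSet y = G.commonNeighbors x y := by
    ext z
    simp [mem_commonNeighbors, and_comm]
  rw [← himage, Set.ncard_image_of_injective _ Subtype.val_injective,
    Set.ncard_eq_toFinset_card', ← neighborFinset_def, card_neighborFinset_eq_degree]

lemma hasClaw_of_isNIndepSet_localGraph {t : ℕ} {s : Finset (G.neighborSet x)}
    (hs : (localGraph G x).IsNIndepSet t s) : HasClaw G t := by
  refine ⟨x, s.map (.subtype _), by rw [card_map, hs.card_eq],
    fun y hy => property_of_mem_map_subtype s hy, ?_⟩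
  rw [coe_map]
  exact (Set.InjOn.pairwise_image Subtype.val_injective.injOn).2 hs.isIndepSet

lemma HasClaw.mono {m n : ℕ} (hmn : m ≤ n) : HasClaw G n → HasClaw G m := by
  rintro ⟨x, s, hs, hadj, hind⟩
  obtain ⟨r, hrs, hr⟩ := exists_subset_card_eq (hmn.trans hs.ge)
  exact ⟨x, r, hr, fun y hy => hadj y (hrs hy), hind.mono (coe_subset.2 hrs)⟩

lemma indepNum_localGraph_le {t : ℕ} (hclaw : ¬ HasClaw G (t + 1)) :
    (localGraph G x).indepNum ≤ t := by
  by_contra! hlt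
  obtain ⟨s, hs⟩ := (localGraph G x).exists_isNIndepSet_indepNum
  exact hclaw ((hasClaw_of_isNIndepSet_localGraph hs).mono hlt)

lemma exists_isNClique_cliqueNum_localGraph_add_one (G : SimpleGraph V) (x : V) :
    ∃ s : Finset V, x ∈ s ∧ G.IsNClique ((localGraph G x).cliqueNum + 1) s := by
  classical
  obtain ⟨r, hr⟩ := (localGraph G x).exists_isNClique_cliqueNum
  rw [isNClique_induce_iff] at hr
  exact ⟨_, mem_insert_self x _, hr.insert fun y hy => property_of_mem_map_subtype r hy⟩

end LocalGraph

theorem statement3_general {V : Type*} (G : SimpleGraph V) (x : V) [Fintype (G.neighborSet x)]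
    {a : ℤ} {t : ℕ} (ha : 0 ≤ a)
    (hcommon : ∀ y, G.Adj x y → ((G.commonNeighbors x y).ncard : ℤ) ≤ a)
    (hclaw : ¬ HasClaw G (t + 1)) :
    ∃ s : Finset V, x ∈ s ∧ G.IsClique (s : Set V) ∧
      2 * (G.degree x : ℤ) - t * (a + 1) ≤ (t : ℤ) * ((#s : ℤ) - 1) := by
  classical
  lift a to ℕ using ha
  obtain ⟨s, hxs, hs⟩ := exists_isNClique_cliqueNum_localGraph_add_one G x
  have hdeg : (localGraph G x).maxDegree ≤ a := maxDegree_le_of_forall_degree_le _ _ fun y => by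
    rw [degree_localGraph]
    exact_mod_cast hcommon y y.2
  have hbound : 2 * G.degree x ≤ t * (a + (localGraph G x).cliqueNum + 1) := by
    rw [← card_neighborSet_eq_degree]
    refine (two_mul_card_le_indepNum_mul (localGraph G x)).trans ?_
    gcongr
    exact indepNum_localGraph_le hclaw
  refine ⟨s, hxs, hs.isClique, ?_⟩
  rw [hs.card_eq]
  zify at hbound
  push_cast
  linarith

lemma neighborSet_eq_insert_commonNeighbors_union {V : Type*} {G : SimpleGraph V} {x y : V}
    (hxy : G.Adj x y) :
    G.neighborSet y =
      insert x (G.commonNeighbors x y ∪ {z | G.Adj y z ∧ G.dist x z = 2}) := by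
  ext z
  simp only [mem_neighborSet, Set.mem_insert_iff, Set.mem_union, mem_commonNeighbors,
    Set.mem_ofPred_eq]
  refine ⟨fun hyz => ?_, ?_⟩
  · have hle : G.dist x z ≤ 2 := dist_le (hxy.toWalk.concat hyz)
    have hreach : G.Reachable x z := hxy.reachable.trans hyz.reachable
    interval_cases hdist : G.dist x z
    · exact .inl (hreach.dist_eq_zero_iff.1 hdist).symm
    · exact .inr (.inl ⟨dist_eq_one_iff_adj.1 hdist, hyz⟩)
    · exact .inr (.inr ⟨hyz, rfl⟩)
  · rintro (rfl | ⟨-, hyz⟩ | ⟨hyz, -⟩)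
    exacts [hxy.symm, hyz, hyz]

namespace IsDRG

variable {V : Type*} [Fintype V] {G : SimpleGraph V} {D : ℕ} {b c : ℕ → ℕ}

lemma ncard_neighborSet (h : IsDRG G D b c) (x : V) : (G.neighborSet x).ncard = b 0 := by
  obtain ⟨-, -, -, -, -, -, hcount⟩ := h
  rw [← (hcount 0 D.zero_le x x dist_self).2]
  congr 1
  ext z
  simp

lemma degree_eq (h : IsDRG G D b c) (x : V) [Fintype (G.neighborSet x)] : G.degree x = b 0 := by
  rw [← h.ncard_neighborSet x, Set.ncard_eq_toFinset_card', ← neighborFinset_def,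
    card_neighborFinset_eq_degree]

lemma ncard_commonNeighbors_eq (h : IsDRG G D b c) {x y : V} (hxy : G.Adj x y) :
    ((G.commonNeighbors x y).ncard : ℤ) = b 0 - b 1 - c 1 := by
  have hk := h.ncard_neighborSet y
  obtain ⟨-, -, hdiam, -, hc, -, hcount⟩ := h
  have hdist : G.dist x y = 1 := dist_eq_one_iff_adj.2 hxy
  have hb : {z | G.Adj y z ∧ G.dist x z = 2}.ncard = b 1 :=
    (hcount 1 (hdist ▸ hdiam x y) x y hdist).2
  have hdisj : Disjoint (G.commonNeighbors x y) {z | G.Adj y z ∧ G.dist x z = 2} := by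
    refine Set.disjoint_left.2 fun z hz hz' => ?_
    have hone : G.dist x z = 1 := dist_eq_one_iff_adj.2 hz.1
    have htwo : G.dist x z = 2 := hz'.2
    omega
  have hx : x ∉ G.commonNeighbors x y ∪ {z | G.Adj y z ∧ G.dist x z = 2} := by
    simp [mem_commonNeighbors]
  rw [neighborSet_eq_insert_commonNeighbors_union hxy, Set.ncard_insert_of_notMem hx,
    Set.ncard_union_eq hdisj, hb] at hk
  omega

lemma b_one_add_c_one_le (h : IsDRG G D b c) (hD : 1 ≤ D) : b 1 + c 1 ≤ b 0 := by
  obtain ⟨x, y, hxy⟩ := h.2.1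
  have hne : x ≠ y := by
    rintro rfl
    rw [dist_self] at hxy
    omega
  have : Nontrivial V := nontrivial_of_ne x y hne
  obtain ⟨z, hz⟩ := h.1.preconnected.exists_adj_of_nontrivial x
  have ha := h.ncard_commonNeighbors_eq hz
  omega

end IsDRG

/-- a DRG with a `t`-claw but no `(t+1)`-claws (`t ≥ 3`) contains a clique `C`
with `t·(|C| - 1) ≥ 2k - t(a₁+1)` (here `a₁ = k - b₁ - c₁`). -/
theorem statement3 {V : Type*} [Fintype V] (G : SimpleGraph V) (D : ℕ) (b c : ℕ → ℕ)
    (t : ℕ) (hdrg : IsDRG G D b c) (hD : 2 ≤ D) (ht : 3 ≤ t)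
    (hclaw : HasClaw G t) (hclaw' : ¬ HasClaw G (t + 1)) :
    ∃ s : Finset V, G.IsClique (s : Set V) ∧
      2 * (b 0 : ℤ) - t * (((b 0 : ℤ) - b 1 - c 1) + 1) ≤ (t : ℤ) * ((s.card : ℤ) - 1) := by
  classical
  obtain ⟨x, -⟩ := hclaw
  have hbc := hdrg.b_one_add_c_one_le (by omega)
  obtain ⟨s, -, hs⟩ := statement3_general G x (by omega)
    (fun y hxy => (hdrg.ncard_commonNeighbors_eq hxy).le) hclaw'
  exact ⟨s, hdrg.degree_eq x ▸ hs⟩
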